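/- Let (Ω, P) be a probability space, k ≥ 1 a natural number, E a finite set, and let (X_e)_{e ∈ E} be integrable, everywhere-nonnegative real random variables and (A_e)_{e ∈ E} be random variables taking values in {1, …, k}, such that the whole family (X_e)_{e ∈ E} ∪ (A_e)_{e ∈ E} is mutually independent and each A_e is uniformly distributed on {1, …, k}. Let p be a real number with 0 < p and p^k + p = 1, and let t be a real number such that P(X_e < t for all e ∈ E) = p^k. Define the adversarial value Z of the fully-symmetric threshold mechanism with threshold t by: Z(ω) = max over those i ∈ {1, …, k} for which the set A_i(ω) = {e ∈ E : A_e(ω) = i and X_e(ω) ≥ t} is nonempty of min_{e ∈ A_i(ω)} X_e(ω), and Z(ω) = 0 if this set is empty for every i. Then E[Z] ≥ p · E[max_{e ∈ E} X_e]. -/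

import Mathlib

open MeasureTheory ProbabilityTheory

/-!
By the layer-cake formula it suffices to show `p * P(max X > y) ≤ P(Z > y)` for every level `y > 0`.
If `y < t`, then `Z > y` as soon as some value reaches `t`, which has probability
`1 - p ^ k = p`. If `t ≤ y`, order the elements and let `e` be the first one with value above `y`.
When no other element of value at least `t` is assigned to the agent of `e`, that agent proposes
`X e > y`. The event that `e` comes first only makes the values of the other elements smaller, so
each `e'` spoils this with probability at most `P(t ≤ X e') / k`, and by Bernoulli's inequality
`1 - P(t ≤ X e') / k` is at least the `k`-th root of `P(X e' < t)`. The product of these roots is at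
least `p`.
-/

section Mechanism

variable {ι κ : Type*}

/-- The value proposed by the adversarial agent `i`: the least value among its assigned elements
that reach the threshold `t` (and `0` if there is none). -/
noncomputable def adversarialProposal (t : ℝ) (x : ι → ℝ) (a : ι → κ) (i : κ) : ℝ :=
  sInf {y | ∃ e, a e = i ∧ t ≤ x e ∧ y = x e}

/-- The value accepted by the principal under threshold `t`, for values `x` and assignment `a`: the
largest proposal over the agents having an acceptable element (and `0` if there is no such
agent). -/
noncomputable def adversarialValue (t : ℝ) (x : ι → ℝ) (a : ι → κ) : ℝ :=
  sSup {v | ∃ i, (∃ e, a e = i ∧ t ≤ x e) ∧ v = adversarialProposal t x a i}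

/-- `e` is the first element, in the order of `ι`, whose value exceeds `y`. -/
def IsFirstAbove [LT ι] (y : ℝ) (x : ι → ℝ) (e : ι) : Prop :=
  y < x e ∧ ∀ e' < e, x e' ≤ y

/-- No element other than `e` is both assigned to the agent of `e` and acceptable at
threshold `t`. -/
def IsIsolated (t : ℝ) (x : ι → ℝ) (a : ι → κ) (e : ι) : Prop :=
  ∀ e' ≠ e, a e' = a e → x e' < t

variable {t y : ℝ} {x : ι → ℝ} {a : ι → κ} {i : κ} {e e' : ι}

theorem adversarialProposal_nonneg (hx : ∀ e, 0 ≤ x e) : 0 ≤ adversarialProposal t x a i := by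
  refine Real.sInf_nonneg ?_
  rintro _ ⟨e, -, -, rfl⟩
  exact hx e

theorem adversarialValue_nonneg (hx : ∀ e, 0 ≤ x e) : 0 ≤ adversarialValue t x a := by
  refine Real.sSup_nonneg ?_
  rintro _ ⟨i, -, rfl⟩
  exact adversarialProposal_nonneg hx

theorem finite_setOf_acceptable [Finite ι] : {y | ∃ e, a e = i ∧ t ≤ x e ∧ y = x e}.Finite :=
  (Set.finite_range x).subset <| by rintro _ ⟨e, -, -, rfl⟩; exact ⟨e, rfl⟩

theorem adversarialProposal_le [Finite ι] (he : t ≤ x e) :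
    adversarialProposal t x a (a e) ≤ x e :=
  csInf_le finite_setOf_acceptable.bddBelow ⟨e, rfl, he, rfl⟩

theorem lt_adversarialProposal_iff [Finite ι] (hi : ∃ e, a e = i ∧ t ≤ x e) :
    y < adversarialProposal t x a i ↔ ∀ e, a e = i → t ≤ x e → y < x e := by
  obtain ⟨e, hei, hte⟩ := hi
  rw [adversarialProposal, finite_setOf_acceptable.lt_csInf_iff ⟨x e, e, hei, hte, rfl⟩]
  grind

theorem lt_adversarialValue_iff [Finite ι] [Finite κ] (hy : 0 ≤ y) :
    y < adversarialValue t x a ↔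
      ∃ i, (∃ e, a e = i ∧ t ≤ x e) ∧ ∀ e, a e = i → t ≤ x e → y < x e := by
  constructor
  · contrapose!
    refine fun h ↦ Real.sSup_le ?_ hy
    rintro _ ⟨i, hi, rfl⟩
    refine le_of_not_gt fun hlt ↦ ?_
    obtain ⟨e, hei, hte, hle⟩ := h i hi
    exact hle.not_gt ((lt_adversarialProposal_iff hi).1 hlt e hei hte)
  · rintro ⟨i, hi, h⟩
    have hfin : {v | ∃ i, (∃ e, a e = i ∧ t ≤ x e) ∧ v = adversarialProposal t x a i}.Finite :=
      (Set.finite_range (adversarialProposal t x a)).subset <| by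
        rintro _ ⟨j, -, rfl⟩; exact ⟨j, rfl⟩
    exact lt_csSup_of_lt hfin.bddAbove ⟨i, hi, rfl⟩ ((lt_adversarialProposal_iff hi).2 h)

theorem adversarialValue_le_sum [Fintype ι] (hx : ∀ e, 0 ≤ x e) :
    adversarialValue t x a ≤ ∑ e, x e := by
  refine Real.sSup_le ?_ (Finset.sum_nonneg fun e _ ↦ hx e)
  rintro _ ⟨_, ⟨e, rfl, he⟩, rfl⟩
  exact (adversarialProposal_le he).trans
    (Finset.single_le_sum (fun e _ ↦ hx e) (Finset.mem_univ e))

theorem lt_adversarialValue_of_lt_threshold [Finite ι] [Finite κ] (hy : 0 ≤ y) (hyt : y < t)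
    (he : t ≤ x e) : y < adversarialValue t x a :=
  (lt_adversarialValue_iff hy).2 ⟨a e, ⟨e, rfl, he⟩, fun _ _ h ↦ hyt.trans_le h⟩

theorem IsIsolated.lt_adversarialValue [Finite ι] [Finite κ] (h : IsIsolated t x a e) (hy : 0 ≤ y)
    (hty : t ≤ y) (he : y < x e) : y < adversarialValue t x a := by
  refine (lt_adversarialValue_iff hy).2 ⟨a e, ⟨e, rfl, hty.trans he.le⟩, fun e' ha hte ↦ ?_⟩
  obtain rfl | hne := eq_or_ne e' e
  · exact he
  · exact absurd (h e' hne ha) hte.not_gt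

theorem exists_isFirstAbove [LinearOrder ι] [Finite ι] (h : ∃ e, y < x e) :
    ∃ e, IsFirstAbove y x e := by
  obtain ⟨e, he, hmin⟩ := WellFounded.has_min (wellFounded_lt (α := ι)) {e | y < x e} h
  exact ⟨e, he, fun e' hlt ↦ le_of_not_gt fun he' ↦ hmin e' he' hlt⟩

theorem IsFirstAbove.unique [LinearOrder ι] (h : IsFirstAbove y x e) (h' : IsFirstAbove y x e') :
    e = e' :=
  le_antisymm (le_of_not_gt fun hlt ↦ (h.2 e' hlt).not_gt h'.1)
    (le_of_not_gt fun hlt ↦ (h'.2 e hlt).not_gt h.1)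

end Mechanism

section Bernoulli

theorem le_one_sub_div_pow {a : ℝ} (h0 : 0 ≤ a) (h1 : a ≤ 1) (k : ℕ) :
    a ≤ (1 - (1 - a) / k) ^ k := by
  obtain rfl | hk := eq_or_ne k 0
  · simpa using h1
  have hk1 : (1 : ℝ) ≤ k := by exact_mod_cast Nat.one_le_iff_ne_zero.2 hk
  have hle : (1 - a) / k ≤ 1 := (div_le_one (by linarith)).2 (by linarith)
  calc a = 1 + k * -((1 - a) / k) := by field_simp; ring
    _ ≤ (1 + -((1 - a) / k)) ^ k := one_add_mul_le_pow (by linarith) k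
    _ = (1 - (1 - a) / k) ^ k := by ring

theorem one_sub_div_nonneg {a : ℝ} (h0 : 0 ≤ a) {k : ℕ} (hk : k ≠ 0) : 0 ≤ 1 - (1 - a) / k := by
  have hk1 : (1 : ℝ) ≤ k := by exact_mod_cast Nat.one_le_iff_ne_zero.2 hk
  rw [sub_nonneg, div_le_one (by linarith)]
  linarith

theorem le_prod_one_sub_div {ι : Type*} {s : Finset ι} {a : ι → ℝ} {p : ℝ} {k : ℕ} (hk : k ≠ 0)
    (h0 : ∀ e ∈ s, 0 ≤ a e) (h1 : ∀ e ∈ s, a e ≤ 1) (hp : p ^ k ≤ ∏ e ∈ s, a e) :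
    p ≤ ∏ e ∈ s, (1 - (1 - a e) / k) := by
  refine le_of_pow_le_pow_left₀ hk
    (Finset.prod_nonneg fun e he ↦ one_sub_div_nonneg (h0 e he) hk) (hp.trans ?_)
  rw [← Finset.prod_pow]
  exact Finset.prod_le_prod h0 fun e he ↦ le_one_sub_div_pow (h0 e he) (h1 e he) k

end Bernoulli

section Probability

variable {Ω : Type*} {mΩ : MeasurableSpace Ω} {μ : Measure Ω}

theorem iIndep_biSup_of_pairwise_disjoint {α β : Type*} {m : α → MeasurableSpace Ω}
    (hm : ∀ i, m i ≤ mΩ) (h : iIndep m μ) {S : β → Set α}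
    (hS : Pairwise (Function.onFun Disjoint S)) : iIndep (fun j ↦ ⨆ i ∈ S j, m i) μ := by
  classical
  have := h.isProbabilityMeasure
  rw [iIndep_iff]
  intro s f hf
  induction s using Finset.induction_on with
  | empty => simp
  | insert j s hj ih =>
    have hind : Indep (⨆ i ∈ S j, m i) (⨆ i ∈ ⋃ l ∈ s, S l, m i) μ := by
      refine indep_iSup_of_disjoint hm h ?_
      simp only [Set.disjoint_iUnion_right]
      exact fun l hl ↦ hS (ne_of_mem_of_not_mem hl hj).symm
    have hmeas : MeasurableSet[⨆ i ∈ ⋃ l ∈ s, S l, m i] (⋂ l ∈ s, f l) := by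
      refine Finset.measurableSet_biInter s fun l hl ↦ ?_
      have hle : ⨆ i ∈ S l, m i ≤ ⨆ i ∈ ⋃ l ∈ s, S l, m i :=
        biSup_mono fun i hi ↦ Set.mem_biUnion hl hi
      exact hle _ (hf l (Finset.mem_insert_of_mem hl))
    rw [Finset.set_biInter_insert, Finset.prod_insert hj,
      (Indep_iff _ _ _).1 hind _ _ (hf j (Finset.mem_insert_self j s)) hmeas,
      ih fun l hl ↦ hf l (Finset.mem_insert_of_mem hl)]

theorem iIndepFun_prodMk_of_sum {ι : Type*} {τ : ι ⊕ ι → Type*} {m : ∀ s, MeasurableSpace (τ s)}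
    {f : ∀ s, Ω → τ s} (h : iIndepFun f μ) (hf : ∀ s, Measurable (f s)) :
    iIndepFun (fun e ω ↦ (f (.inl e) ω, f (.inr e) ω)) μ := by
  rw [iIndepFun_iff_iIndep]
  have hdisj : Pairwise (Function.onFun Disjoint fun e : ι ↦ ({.inl e, .inr e} : Set (ι ⊕ ι))) := by
    intro e e' hne
    simp [Function.onFun, hne.symm]
  have hpairs := iIndep_biSup_of_pairwise_disjoint (fun s ↦ (hf s).comap_le) h hdisj
  simp only [iSup_pair, ← MeasurableSpace.comap_prodMk] at hpairs
  exact hpairs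

theorem measureReal_mem_and_forall_ne_mem {ι : Type*} [Fintype ι] [DecidableEq ι] {β : ι → Type*}
    [∀ e, MeasurableSpace (β e)] {Y : ∀ e, Ω → β e} (h : iIndepFun Y μ) {K : ∀ e, Set (β e)}
    (hK : ∀ e, MeasurableSet (K e)) {e : ι} {B : Set (β e)} (hB : MeasurableSet B) :
    μ.real {ω | Y e ω ∈ B ∧ ∀ e' ≠ e, Y e' ω ∈ K e'} =
      μ.real (Y e ⁻¹' B) * ∏ e' ∈ {e}ᶜ, μ.real (Y e' ⁻¹' K e') := by
  have hset : {ω | Y e ω ∈ B ∧ ∀ e' ≠ e, Y e' ω ∈ K e'} =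
      ⋂ e' ∈ Finset.univ, Y e' ⁻¹' Function.update K e B e' := by
    ext ω
    simp only [Finset.mem_univ, Set.iInter_true, Set.mem_iInter, Set.mem_preimage]
    exact (Function.forall_update_iff K fun e' s ↦ Y e' ω ∈ s).symm
  have hmeas : ∀ e' ∈ Finset.univ, MeasurableSet (Function.update K e B e') := fun e' _ ↦
    (Function.forall_update_iff K fun _ s ↦ MeasurableSet s).2 ⟨hB, fun e' _ ↦ hK e'⟩ e'
  rw [measureReal_def, hset, h.measure_inter_preimage_eq_mul _ hmeas, ENNReal.toReal_prod,
    Fintype.prod_eq_mul_prod_compl e, Function.update_self]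
  refine congrArg _ (Finset.prod_congr rfl fun e' he' ↦ ?_)
  rw [Function.update_of_ne (by simpa using he'), measureReal_def]

theorem mul_measureReal_le_measureReal_mem_and_imp [IsProbabilityMeasure μ] {α β : Type*}
    [MeasurableSpace α] [MeasurableSpace β] {X : Ω → α} {A : Ω → β} (hX : Measurable X)
    (hA : Measurable A) (hXA : IndepFun X A μ) {L H : Set α} (hL : MeasurableSet L)
    (hH : MeasurableSet H) (hLH : L ⊆ H) {C : Set β} (hC : MeasurableSet C) :
    (1 - (1 - μ.real (X ⁻¹' L)) * μ.real (A ⁻¹' C)) * μ.real (X ⁻¹' H) ≤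
      μ.real {ω | X ω ∈ H ∧ (A ω ∈ C → X ω ∈ L)} := by
  have hset : {ω | X ω ∈ H ∧ (A ω ∈ C → X ω ∈ L)} =
      X ⁻¹' H \ (X ⁻¹' (H \ L) ∩ A ⁻¹' C) := by
    ext ω
    simp only [Set.mem_ofPred_eq, Set.mem_sdiff, Set.mem_inter_iff, Set.mem_preimage]
    tauto
  have hindep : μ.real (X ⁻¹' (H \ L) ∩ A ⁻¹' C) = μ.real (X ⁻¹' (H \ L)) * μ.real (A ⁻¹' C) := by
    simp only [measureReal_def, ← ENNReal.toReal_mul]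
    rw [hXA.measure_inter_preimage_eq_mul _ _ (hH.diff hL) hC]
  have hdiff : μ.real (X ⁻¹' (H \ L)) ≤ (1 - μ.real (X ⁻¹' L)) * μ.real (X ⁻¹' H) := by
    rw [Set.preimage_sdiff, measureReal_sdiff (Set.preimage_mono hLH) (hX hL)]
    have hmul : μ.real (X ⁻¹' L) * μ.real (X ⁻¹' H) ≤ μ.real (X ⁻¹' L) :=
      mul_le_of_le_one_right measureReal_nonneg measureReal_le_one
    linarith
  calc (1 - (1 - μ.real (X ⁻¹' L)) * μ.real (A ⁻¹' C)) * μ.real (X ⁻¹' H)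
      = μ.real (X ⁻¹' H) -
          (1 - μ.real (X ⁻¹' L)) * μ.real (X ⁻¹' H) * μ.real (A ⁻¹' C) := by ring
    _ ≤ μ.real (X ⁻¹' H) - μ.real (X ⁻¹' (H \ L)) * μ.real (A ⁻¹' C) :=
        sub_le_sub_left (mul_le_mul_of_nonneg_right hdiff measureReal_nonneg) _
    _ = μ.real {ω | X ω ∈ H ∧ (A ω ∈ C → X ω ∈ L)} := by
        have hsub : X ⁻¹' (H \ L) ∩ A ⁻¹' C ⊆ X ⁻¹' H := fun ω hω ↦ hω.1.1
        rw [hset, measureReal_sdiff hsub ((hX (hH.diff hL)).inter (hA hC)), hindep]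

theorem mul_integral_le_integral_of_mul_measureReal_lt_le [IsFiniteMeasure μ] {f g : Ω → ℝ}
    (hf0 : 0 ≤ᵐ[μ] f) (hf : AEMeasurable f μ) (hg0 : 0 ≤ᵐ[μ] g) (hg : Integrable g μ) {c : ℝ}
    (hc : 0 ≤ c) (h : ∀ y, 0 < y → c * μ.real {ω | y < f ω} ≤ μ.real {ω | y < g ω}) :
    c * ∫ ω, f ω ∂μ ≤ ∫ ω, g ω ∂μ := by
  have key : ENNReal.ofReal c * ∫⁻ ω, ENNReal.ofReal (f ω) ∂μ ≤
      ∫⁻ ω, ENNReal.ofReal (g ω) ∂μ := by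
    rw [lintegral_eq_lintegral_meas_lt μ hf0 hf,
      lintegral_eq_lintegral_meas_lt μ hg0 hg.aemeasurable,
      ← lintegral_const_mul' _ _ ENNReal.ofReal_ne_top]
    refine setLIntegral_mono' measurableSet_Ioi fun y hy ↦ ?_
    have hy' := ENNReal.ofReal_le_ofReal (h y hy)
    rwa [ENNReal.ofReal_mul hc, ofReal_measureReal, ofReal_measureReal] at hy'
  rw [integral_eq_lintegral_of_nonneg_ae hf0 hf.aestronglyMeasurable,
    integral_eq_lintegral_of_nonneg_ae hg0 hg.aestronglyMeasurable]
  simpa only [ENNReal.toReal_mul, ENNReal.toReal_ofReal hc] using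
    ENNReal.toReal_mono hg.lintegral_lt_top.ne key

end Probability

section Measurability

variable {Ω ι κ : Type*} {mΩ : MeasurableSpace Ω} {μ : Measure Ω} [Finite ι] [Finite κ]
  [MeasurableSpace κ] [MeasurableSingletonClass κ] {X : ι → Ω → ℝ} {A : ι → Ω → κ} {t y : ℝ}

theorem measurable_adversarialValue (hX : ∀ e, Measurable (X e)) (hA : ∀ e, Measurable (A e))
    (hX0 : ∀ e ω, 0 ≤ X e ω) : Measurable fun ω ↦ adversarialValue t (X · ω) (A · ω) := by
  refine measurable_of_Ioi fun y ↦ ?_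
  obtain hy | hy := le_or_gt 0 y
  · simp only [Set.preimage, Set.mem_Ioi, lt_adversarialValue_iff hy]
    measurability
  · convert MeasurableSet.univ
    exact Set.eq_univ_of_forall fun ω ↦ hy.trans_le (adversarialValue_nonneg (hX0 · ω))

theorem integrable_adversarialValue (hX : ∀ e, Measurable (X e)) (hA : ∀ e, Measurable (A e))
    (hint : ∀ e, Integrable (X e) μ) (hX0 : ∀ e ω, 0 ≤ X e ω) :
    Integrable (fun ω ↦ adversarialValue t (X · ω) (A · ω)) μ := by
  have := Fintype.ofFinite ι
  refine (integrable_finsetSum Finset.univ fun e _ ↦ hint e).mono'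
    (measurable_adversarialValue hX hA hX0).aestronglyMeasurable (.of_forall fun ω ↦ ?_)
  rw [Real.norm_of_nonneg (adversarialValue_nonneg (hX0 · ω))]
  exact adversarialValue_le_sum (hX0 · ω)

theorem measurableSet_isIsolated (hX : ∀ e, Measurable (X e)) (hA : ∀ e, Measurable (A e))
    (e : ι) : MeasurableSet {ω | IsIsolated t (X · ω) (A · ω) e} := by
  unfold IsIsolated
  measurability

theorem measurableSet_isFirstAbove [LinearOrder ι] (hX : ∀ e, Measurable (X e)) (e : ι) :
    MeasurableSet {ω | IsFirstAbove y (X · ω) e} := by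
  unfold IsFirstAbove
  measurability

end Measurability

/-- The shuffled model: an assignment of elements to agents which is uniform on the finite type of
agents and independent of the values. Mutual independence of all the values and agents is encoded as
independence of the pairs `(X e, A e)` together with independence inside each pair. -/
structure IsShuffled {Ω ι κ : Type*} {mΩ : MeasurableSpace Ω} [Fintype κ] [MeasurableSpace κ]
    (X : ι → Ω → ℝ) (A : ι → Ω → κ) (μ : Measure Ω) : Prop where
  measurable_value : ∀ e, Measurable (X e)
  measurable_agent : ∀ e, Measurable (A e)
  iIndepFun_pair : iIndepFun (fun e ω ↦ (X e ω, A e ω)) μ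
  indepFun : ∀ e, IndepFun (X e) (A e) μ
  measureReal_agent : ∀ e i, μ.real (A e ⁻¹' {i}) = (Fintype.card κ : ℝ)⁻¹

namespace IsShuffled

variable {Ω ι κ : Type*} {mΩ : MeasurableSpace Ω} {μ : Measure Ω} [Fintype κ]
  [MeasurableSpace κ] {X : ι → Ω → ℝ} {A : ι → Ω → κ} {p t y : ℝ} {e : ι}

theorem isProbabilityMeasure (h : IsShuffled X A μ) : IsProbabilityMeasure μ :=
  h.iIndepFun_pair.isProbabilityMeasure

theorem card_agents_ne_zero (h : IsShuffled X A μ) (e : ι) : Fintype.card κ ≠ 0 := by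
  have := h.isProbabilityMeasure
  obtain ⟨ω⟩ := nonempty_of_isProbabilityMeasure μ
  have : Nonempty κ := ⟨A e ω⟩
  exact Fintype.card_ne_zero

theorem iIndepFun_value (h : IsShuffled X A μ) : iIndepFun X μ :=
  h.iIndepFun_pair.comp (fun _ ↦ Prod.fst) fun _ ↦ measurable_fst

theorem le_prod_one_sub_div_card [Fintype ι] [DecidableEq ι] (h : IsShuffled X A μ)
    (hp : p ^ Fintype.card κ ≤ μ.real {ω | ∀ e, X e ω < t}) (e : ι) :
    p ≤ ∏ e' ∈ {e}ᶜ, (1 - (1 - μ.real (X e' ⁻¹' Set.Iio t)) / Fintype.card κ) := by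
  have := h.isProbabilityMeasure
  refine le_prod_one_sub_div (h.card_agents_ne_zero e) (fun _ _ ↦ measureReal_nonneg)
    (fun _ _ ↦ measureReal_le_one) (hp.trans ?_)
  calc μ.real {ω | ∀ e, X e ω < t}
      ≤ μ.real {ω | X e ω ∈ Set.univ ∧ ∀ e' ≠ e, X e' ω ∈ Set.Iio t} :=
        measureReal_mono fun ω hω ↦ ⟨trivial, fun e' _ ↦ hω e'⟩
    _ = ∏ e' ∈ {e}ᶜ, μ.real (X e' ⁻¹' Set.Iio t) := by
        rw [measureReal_mem_and_forall_ne_mem h.iIndepFun_value (fun _ ↦ measurableSet_Iio) .univ]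
        simp

theorem mul_prod_measureReal_le_prod_measureReal [MeasurableSingletonClass κ] [Fintype ι]
    [DecidableEq ι] (h : IsShuffled X A μ)
    (hp : p ^ Fintype.card κ ≤ μ.real {ω | ∀ e, X e ω < t}) {H : ι → Set ℝ}
    (hH : ∀ e, MeasurableSet (H e)) (hHt : ∀ e, Set.Iio t ⊆ H e) (i : κ) :
    p * ∏ e' ∈ {e}ᶜ, μ.real (X e' ⁻¹' H e') ≤
      ∏ e' ∈ {e}ᶜ, μ.real {ω | X e' ω ∈ H e' ∧ (A e' ω ∈ ({i} : Set κ) → X e' ω ∈ Set.Iio t)} := by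
  have := h.isProbabilityMeasure
  have hfactor (e' : ι) :
      (1 - (1 - μ.real (X e' ⁻¹' Set.Iio t)) / Fintype.card κ) * μ.real (X e' ⁻¹' H e') ≤
        μ.real {ω | X e' ω ∈ H e' ∧ (A e' ω ∈ ({i} : Set κ) → X e' ω ∈ Set.Iio t)} := by
    rw [div_eq_mul_inv, ← h.measureReal_agent e' i]
    exact mul_measureReal_le_measureReal_mem_and_imp (h.measurable_value e') (h.measurable_agent e')
      (h.indepFun e') measurableSet_Iio (hH e') (hHt e') (measurableSet_singleton i)
  refine (mul_le_mul_of_nonneg_right (h.le_prod_one_sub_div_card hp e)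
    (Finset.prod_nonneg fun _ _ ↦ measureReal_nonneg)).trans ?_
  rw [← Finset.prod_mul_distrib]
  exact Finset.prod_le_prod (fun e' _ ↦ mul_nonneg
    (one_sub_div_nonneg measureReal_nonneg (h.card_agents_ne_zero e)) measureReal_nonneg)
    fun e' _ ↦ hfactor e'

theorem mul_measureReal_le_measureReal_isIsolated_agent [MeasurableSingletonClass κ] [Finite ι]
    (h : IsShuffled X A μ) (hp : p ^ Fintype.card κ ≤ μ.real {ω | ∀ e, X e ω < t}) {B : Set ℝ}
    (hB : MeasurableSet B) {H : ι → Set ℝ} (hH : ∀ e, MeasurableSet (H e))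
    (hHt : ∀ e, Set.Iio t ⊆ H e) (i : κ) :
    p * μ.real {ω | X e ω ∈ B ∧ ∀ e' ≠ e, X e' ω ∈ H e'} * (Fintype.card κ : ℝ)⁻¹ ≤
      μ.real ({ω | (X e ω ∈ B ∧ ∀ e' ≠ e, X e' ω ∈ H e') ∧ IsIsolated t (X · ω) (A · ω) e} ∩
        A e ⁻¹' {i}) := by
  classical
  have := Fintype.ofFinite ι
  let K (e' : ι) : Set (ℝ × κ) := {z | z.1 ∈ H e' ∧ (z.2 ∈ ({i} : Set κ) → z.1 ∈ Set.Iio t)}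
  have hK (e' : ι) : MeasurableSet (K e') :=
    (measurable_fst (hH e')).inter ((measurable_snd (measurableSet_singleton i)).himp
      (measurable_fst measurableSet_Iio))
  have hset : {ω | (X e ω ∈ B ∧ ∀ e' ≠ e, X e' ω ∈ H e') ∧ IsIsolated t (X · ω) (A · ω) e} ∩
      A e ⁻¹' {i} = {ω | (X e ω, A e ω) ∈ B ×ˢ {i} ∧ ∀ e' ≠ e, (X e' ω, A e' ω) ∈ K e'} := by
    ext ω
    simp only [IsIsolated, K, Set.mem_inter_iff, Set.mem_ofPred_eq, Set.mem_preimage,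
      Set.mem_singleton_iff, Set.mem_prod, Set.mem_Iio]
    grind
  have hpair : μ.real ((fun ω ↦ (X e ω, A e ω)) ⁻¹' B ×ˢ {i}) =
      μ.real (X e ⁻¹' B) * (Fintype.card κ : ℝ)⁻¹ := by
    rw [← h.measureReal_agent e i, Set.mk_preimage_prod]
    simp only [measureReal_def, ← ENNReal.toReal_mul]
    rw [(h.indepFun e).measure_inter_preimage_eq_mul _ _ hB (measurableSet_singleton i)]
  rw [hset, measureReal_mem_and_forall_ne_mem h.iIndepFun_value hH hB,
    measureReal_mem_and_forall_ne_mem h.iIndepFun_pair hK (hB.prod (measurableSet_singleton i)),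
    hpair, mul_left_comm, mul_right_comm]
  exact mul_le_mul_of_nonneg_left (h.mul_prod_measureReal_le_prod_measureReal hp hH hHt i)
    (by positivity)

theorem mul_measureReal_le_measureReal_isIsolated [MeasurableSingletonClass κ] [Finite ι]
    (h : IsShuffled X A μ) (hp : p ^ Fintype.card κ ≤ μ.real {ω | ∀ e, X e ω < t}) {B : Set ℝ}
    (hB : MeasurableSet B) {H : ι → Set ℝ} (hH : ∀ e, MeasurableSet (H e))
    (hHt : ∀ e, Set.Iio t ⊆ H e) :
    p * μ.real {ω | X e ω ∈ B ∧ ∀ e' ≠ e, X e' ω ∈ H e'} ≤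
      μ.real {ω | (X e ω ∈ B ∧ ∀ e' ≠ e, X e' ω ∈ H e') ∧
        IsIsolated t (X · ω) (A · ω) e} := by
  have hcard : (Fintype.card κ : ℝ) ≠ 0 := Nat.cast_ne_zero.2 (h.card_agents_ne_zero e)
  have := h.isProbabilityMeasure
  set F := {ω | X e ω ∈ B ∧ ∀ e' ≠ e, X e' ω ∈ H e'}
  set G := {ω | (X e ω ∈ B ∧ ∀ e' ≠ e, X e' ω ∈ H e') ∧ IsIsolated t (X · ω) (A · ω) e}
  have hA (i : κ) : MeasurableSet (A e ⁻¹' {i}) := h.measurable_agent e (measurableSet_singleton i)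
  calc p * μ.real F = ∑ _i : κ, p * μ.real F * (Fintype.card κ : ℝ)⁻¹ := by
        rw [Finset.sum_const, Finset.card_univ, nsmul_eq_mul]
        field_simp
    _ ≤ ∑ i, μ.real (G ∩ A e ⁻¹' {i}) := Finset.sum_le_sum fun i _ ↦
        h.mul_measureReal_le_measureReal_isIsolated_agent hp hB hH hHt i
    _ = ∑ i, (μ.restrict G).real (A e ⁻¹' {i}) := by
        simp only [measureReal_restrict_apply (hA _), Set.inter_comm]
    _ = μ.real G := by
        rw [sum_measureReal_preimage_singleton _ fun i _ ↦ hA i]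
        simp

theorem mul_measureReal_isFirstAbove_le [MeasurableSingletonClass κ] [Finite ι] [LinearOrder ι]
    (h : IsShuffled X A μ) (hp : p ^ Fintype.card κ ≤ μ.real {ω | ∀ e, X e ω < t}) (hty : t ≤ y)
    (e : ι) :
    p * μ.real {ω | IsFirstAbove y (X · ω) e} ≤
      μ.real {ω | IsFirstAbove y (X · ω) e ∧ IsIsolated t (X · ω) (A · ω) e} := by
  have hfirst (ω : Ω) : IsFirstAbove y (X · ω) e ↔
      X e ω ∈ Set.Ioi y ∧ ∀ e' ≠ e, X e' ω ∈ {z | e' < e → z ≤ y} := by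
    simp only [IsFirstAbove, Set.mem_Ioi, Set.mem_ofPred_eq]
    grind
  simp only [hfirst]
  exact h.mul_measureReal_le_measureReal_isIsolated hp measurableSet_Ioi
    (fun e' ↦ (MeasurableSet.const (e' < e)).himp measurableSet_Iic)
    (fun e' z hz _ ↦ (hz.trans_le hty).le)

theorem mul_measureReal_exists_lt_le_of_threshold_le [MeasurableSingletonClass κ] [Finite ι]
    (h : IsShuffled X A μ) (hp0 : 0 ≤ p)
    (hp : p ^ Fintype.card κ ≤ μ.real {ω | ∀ e, X e ω < t}) (hy : 0 ≤ y) (hty : t ≤ y) :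
    p * μ.real {ω | ∃ e, y < X e ω} ≤ μ.real {ω | y < adversarialValue t (X · ω) (A · ω)} := by
  have := h.isProbabilityMeasure
  have := Fintype.ofFinite ι
  let : LinearOrder ι := LinearOrder.lift' (Fintype.equivFin ι) (Equiv.injective _)
  let F (e : ι) : Set Ω := {ω | IsFirstAbove y (X · ω) e}
  let G (e : ι) : Set Ω := {ω | IsFirstAbove y (X · ω) e ∧ IsIsolated t (X · ω) (A · ω) e}
  have hG (e : ι) : MeasurableSet (G e) := (measurableSet_isFirstAbove h.measurable_value e).inter
    (measurableSet_isIsolated h.measurable_value h.measurable_agent e)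
  have hdisj : Pairwise (Function.onFun Disjoint G) := fun e e' hne ↦
    Set.disjoint_left.2 fun ω hω hω' ↦ hne (hω.1.unique hω'.1)
  calc p * μ.real {ω | ∃ e, y < X e ω} ≤ p * μ.real (⋃ e, F e) :=
        mul_le_mul_of_nonneg_left
          (measureReal_mono fun ω hω ↦ Set.mem_iUnion.2 (exists_isFirstAbove hω)) hp0
    _ ≤ p * ∑ e, μ.real (F e) :=
        mul_le_mul_of_nonneg_left (measureReal_iUnion_fintype_le F) hp0
    _ = ∑ e, p * μ.real (F e) := Finset.mul_sum ..
    _ ≤ ∑ e, μ.real (G e) :=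
        Finset.sum_le_sum fun e _ ↦ h.mul_measureReal_isFirstAbove_le hp hty e
    _ = μ.real (⋃ e, G e) := (measureReal_iUnion_fintype hdisj hG).symm
    _ ≤ μ.real {ω | y < adversarialValue t (X · ω) (A · ω)} := by
        refine measureReal_mono (Set.iUnion_subset fun e ω hω ↦ ?_)
        exact hω.2.lt_adversarialValue hy hty hω.1.1

theorem one_sub_measureReal_le_of_lt_threshold [Finite ι] (h : IsShuffled X A μ) (hy : 0 ≤ y)
    (hyt : y < t) :
    1 - μ.real {ω | ∀ e, X e ω < t} ≤
      μ.real {ω | y < adversarialValue t (X · ω) (A · ω)} := by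
  have := h.isProbabilityMeasure
  have hX := h.measurable_value
  rw [← probReal_compl_eq_one_sub (by measurability)]
  refine measureReal_mono fun ω hω ↦ ?_
  obtain ⟨e, he⟩ : ∃ e, t ≤ X e ω := by simpa using hω
  exact lt_adversarialValue_of_lt_threshold hy hyt he

end IsShuffled

theorem shuffled_adversarial_lower_bound_general {Ω ι κ : Type*} {mΩ : MeasurableSpace Ω}
    {μ : Measure Ω} [Finite ι] [Fintype κ] [MeasurableSpace κ] [MeasurableSingletonClass κ]
    {X : ι → Ω → ℝ} {A : ι → Ω → κ} (h : IsShuffled X A μ) (hint : ∀ e, Integrable (X e) μ)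
    (hX0 : ∀ e ω, 0 ≤ X e ω) {p t : ℝ} (hp0 : 0 ≤ p)
    (hp : p ^ Fintype.card κ ≤ μ.real {ω | ∀ e, X e ω < t})
    (hp' : p ≤ 1 - μ.real {ω | ∀ e, X e ω < t}) :
    p * ∫ ω, ⨆ e, X e ω ∂μ ≤ ∫ ω, adversarialValue t (X · ω) (A · ω) ∂μ := by
  have := h.isProbabilityMeasure
  refine mul_integral_le_integral_of_mul_measureReal_lt_le
    (.of_forall fun ω ↦ Real.iSup_nonneg (hX0 · ω))
    (Measurable.iSup h.measurable_value).aemeasurable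
    (.of_forall fun ω ↦ adversarialValue_nonneg (hX0 · ω))
    (integrable_adversarialValue h.measurable_value h.measurable_agent hint hX0) hp0 fun y hy ↦ ?_
  obtain hty | hyt := le_or_gt t y
  · have hmax : {ω | y < ⨆ e, X e ω} ⊆ {ω | ∃ e, y < X e ω} := fun ω ↦ by
      simpa using mt (Real.iSup_le · hy.le)
    exact (mul_le_mul_of_nonneg_left (measureReal_mono hmax) hp0).trans
      (h.mul_measureReal_exists_lt_le_of_threshold_le hp0 hp hy.le hty)
  · exact (mul_le_of_le_one_right hp0 measureReal_le_one).trans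
      (hp'.trans (h.one_sub_measureReal_le_of_lt_threshold hy.le hyt))

/-- Shuffled adversarial lower bound: element values `X e` and uniformly random agent
assignments `A e` are all mutually independent; with `p` the positive root of
`p ^ k + p - 1 = 0` and `t` a threshold with `P(∀ e, X e < t) = p ^ k`, the adversarial
value of the fully-symmetric threshold mechanism with threshold `t` — the largest, over
agents `i` assigned at least one element of value `≥ t`, of the least such value assigned
to `i` (with `sSup ∅ = 0` in Mathlib's real numbers) — has expectation at least
`p · E[max_e X e]`. -/
theorem shuffled_adversarial_lower_bound
    {Ω : Type*} [MeasureSpace Ω] [IsProbabilityMeasure (ℙ : Measure Ω)]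
    {ι : Type*} [Fintype ι] (k : ℕ) (hk : 1 ≤ k)
    (X : ι → Ω → ℝ) (A : ι → Ω → Fin k)
    (hXmeas : ∀ e, Measurable (X e)) (hAmeas : ∀ e, Measurable (A e))
    (hint : ∀ e, Integrable (X e) ℙ)
    (hnonneg : ∀ e ω, 0 ≤ X e ω)
    (hindep : iIndepFun
      (m := fun s : ι ⊕ ι => Sum.rec
        (motive := fun s => MeasurableSpace (Sum.elim (fun _ : ι => ℝ) (fun _ : ι => Fin k) s))
        (fun _ => (inferInstance : MeasurableSpace ℝ))
        (fun _ => (inferInstance : MeasurableSpace (Fin k))) s)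
      (fun s : ι ⊕ ι => Sum.rec
        (motive := fun s => Ω → Sum.elim (fun _ : ι => ℝ) (fun _ : ι => Fin k) s)
        (fun e => X e) (fun e => A e) s) ℙ)
    (hunif : ∀ (e : ι) (i : Fin k), ℙ {ω | A e ω = i} = (k : ENNReal)⁻¹)
    (p : ℝ) (hp : 0 < p) (hroot : p ^ k + p = 1) (t : ℝ)
    (ht : ℙ {ω | ∀ e, X e ω < t} = ENNReal.ofReal (p ^ k)) :
    p * ∫ ω, sSup {x | ∃ e, x = X e ω} ∂ℙ ≤
      ∫ ω, sSup {v | ∃ i : Fin k, (∃ e, A e ω = i ∧ t ≤ X e ω) ∧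
        v = sInf {x | ∃ e, A e ω = i ∧ t ≤ X e ω ∧ x = X e ω}} ∂ℙ := by
  have hq : (ℙ : Measure Ω).real {ω | ∀ e, X e ω < t} = p ^ k := by
    rw [measureReal_def, ht, ENNReal.toReal_ofReal (by positivity)]
  have hshuffled : IsShuffled X A ℙ :=
    { measurable_value := hXmeas
      measurable_agent := hAmeas
      iIndepFun_pair := iIndepFun_prodMk_of_sum hindep (Sum.rec hXmeas hAmeas)
      indepFun := fun e ↦ hindep.indepFun (i := .inl e) (j := .inr e) Sum.inl_ne_inr
      measureReal_agent := fun e i ↦ by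
        rw [measureReal_def, Set.preimage, Fintype.card_fin]
        simpa using congrArg ENNReal.toReal (hunif e i) }
  have hmax (ω : Ω) : sSup {x | ∃ e, x = X e ω} = ⨆ e, X e ω :=
    congrArg sSup (Set.ext fun _ ↦ exists_congr fun _ ↦ eq_comm)
  simp only [hmax]
  exact shuffled_adversarial_lower_bound_general hshuffled hint hnonneg hp.le
    (by rw [hq, Fintype.card_fin]) (by linarith)
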